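/- Let n ≥ 1, m > n, and let p ∈ P^log(ℝ^n) be a measurable exponent with p⁻ = p_∞ = 2 and p⁺ < ∞. Define ζ(t) = 2/p⁻ = 1 for 0 < t ≤ 1 and ζ(t) = 2/p⁺ for t > 1, and define K(t) = 1/p⁺ + ζ(t)(1 − 2/p⁺) if either 0 < t ≤ 1 or [t > 1 and p⁺ > 4], and K(t) = 1/2 if t > 1 and p⁺ ≤ 4. Then there exists a constant C > 0, depending only on m, n and p, such that for every t > 0 and all u, v ∈ L^{p(·)}(ℝ^n), ‖η_{t,m} * (uv)‖_{L^{p(·)}(ℝ^n)} ≤ C t^{−nK(t)} ‖u‖_{L^{p(·)}(ℝ^n)} ‖v‖_{L^{p(·)}(ℝ^n)}. -/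

import Mathlib

open MeasureTheory Filter Real
open scoped ENNReal

noncomputable section

/-- Euclidean space `ℝⁿ`. -/
abbrev Esp (n : ℕ) := EuclideanSpace ℝ (Fin n)

/-- The variable exponent modular `ρ_{p(·)}(f) = ∫_{ℝⁿ} |f(x)|^{p(x)} dx`. -/
def vMod (n : ℕ) (p : Esp n → ℝ) (f : Esp n → ℝ) : ℝ≥0∞ :=
  ∫⁻ x, (ENNReal.ofReal |f x|) ^ (p x) ∂volume

/-- The Luxemburg norm `‖f‖_{L^{p(·)}} = inf {λ > 0 : ρ_{p(·)}(f/λ) ≤ 1}`. -/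
def luxNorm (n : ℕ) (p : Esp n → ℝ) (f : Esp n → ℝ) : ℝ :=
  sInf {lam : ℝ | 0 < lam ∧ vMod n p (fun x => f x / lam) ≤ 1}

/-- Membership in the variable exponent Lebesgue space `L^{p(·)}(ℝⁿ)`. -/
def MemVLp (n : ℕ) (p : Esp n → ℝ) (f : Esp n → ℝ) : Prop :=
  AEMeasurable f volume ∧ ∃ lam : ℝ, 0 < lam ∧ vMod n p (fun x => f x / lam) ≤ 1

/-- Global log-Hölder continuity of `1/p` with decay value `l` (representing `l = 1/p_∞`). -/
def IsLogHolder (n : ℕ) (p : Esp n → ℝ) (l : ℝ) : Prop :=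
  ∃ c : ℝ, 0 < c ∧
    (∀ x y : Esp n, |1 / p x - 1 / p y| ≤ c / Real.log (Real.exp 1 + 1 / ‖x - y‖)) ∧
    (∀ x : Esp n, |1 / p x - l| ≤ c / Real.log (Real.exp 1 + ‖x‖))

/-- The kernel `η_{t,m}(x) = t^{-n} (1 + |x|/t)^{-m}`. -/
def etaKer (n : ℕ) (t m : ℝ) (x : Esp n) : ℝ :=
  t ^ (-(n : ℝ)) * (1 + ‖x‖ / t) ^ (-m)

/-- Convolution `(u * v)(x) = ∫ u(x - y) v(y) dy`. -/
def convR (n : ℕ) (u v : Esp n → ℝ) (x : Esp n) : ℝ :=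
  ∫ y, u (x - y) * v y ∂volume

/-!
At infinity `p` decays to `2` so fast that, where `|f|` exceeds `(e + |x|)^{-(n+1)/2}`, the factor
`|f|^{2 - p}` is bounded; elsewhere `|f|²` is integrable on its own. Hence `L^{p(·)} ⊂ L²`, and
Hölder's inequality puts `uv` in `L¹`. Convolution with `η_{t,m}` maps `L¹` to `L^∞` with norm at
most `t^{-n}` and to `L¹` with norm independent of `t`. Interpolating pointwise,
`|g|^p ≤ ‖g‖_∞^{p-1} |g|`, gives the norm `t^{-n(1-1/p)}` into `L^{p(·)}`, whose worst value for
`2 ≤ p ≤ p⁺` is attained at `p = p⁺` if `t ≤ 1` and at `p = 2` if `t > 1`.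
-/

open scoped NNReal

section Pointwise

lemma rpow_le_exp_mul_rpow_add {a q p P r c m : ℝ} (ha : 0 ≤ a) (hq : 0 < q) (hqp : q ≤ p)
    (hpP : p ≤ P) (hr : 0 ≤ r) (hm : 0 ≤ m)
    (hdecay : 1 / q - 1 / p ≤ c / log (exp 1 + r)) :
    a ^ q ≤ exp (m * P * c) * a ^ p + (1 + r) ^ (-m) := by
  have hp : 0 < p := hq.trans_le hqp
  have hone : 1 ≤ exp 1 := one_le_exp zero_le_one
  set s := exp 1 + r
  have hs : 0 < s := by positivity
  have hlog : 0 < log s := log_pos (by linarith [exp_one_gt_two])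
  rcases le_or_gt (a ^ q) (s ^ (-m)) with hsmall | hlarge
  · have : s ^ (-m) ≤ (1 + r) ^ (-m) :=
      rpow_le_rpow_of_nonpos (by positivity) (by linarith) (neg_nonpos.2 hm)
    exact le_add_of_nonneg_of_le (by positivity) (hsmall.trans this)
  have ha_pos : 0 < a := by
    refine ha.lt_of_ne' fun h => ?_
    rw [h, zero_rpow hq.ne'] at hlarge
    exact absurd hlarge (rpow_nonneg hs.le _).not_gt
  have hlog_a : -m * log s ≤ q * log a := by
    rw [← log_rpow hs, ← log_rpow ha_pos]
    exact log_le_log (by positivity) hlarge.le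
  have hgap : (p - q) * log s ≤ c * (q * p) := by
    have : 1 / q - 1 / p = (p - q) / (q * p) := by field_simp
    rwa [this, div_le_div_iff₀ (by positivity) hlog] at hdecay
  have hc : 0 ≤ c := by
    have : 0 ≤ c * (q * p) := (mul_nonneg (sub_nonneg.2 hqp) hlog.le).trans hgap
    exact nonneg_of_mul_nonneg_left this (by positivity)
  have hexponent : log a * (q - p) ≤ m * P * c := by
    have : q * (log a * (q - p)) ≤ q * (m * p * c) := by
      linarith [mul_le_mul_of_nonneg_left hlog_a (sub_nonneg.2 hqp),
        mul_le_mul_of_nonneg_left hgap hm]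
    calc log a * (q - p) ≤ m * p * c := le_of_mul_le_mul_left this hq
      _ ≤ m * P * c := by gcongr
  calc a ^ q = a ^ (q - p) * a ^ p := by rw [← rpow_add ha_pos, sub_add_cancel]
    _ ≤ exp (m * P * c) * a ^ p := by
        rw [rpow_def_of_pos ha_pos (q - p)]
        gcongr
    _ ≤ exp (m * P * c) * a ^ p + (1 + r) ^ (-m) := le_add_of_nonneg_right (by positivity)

lemma div_rpow_le_div {a B I lam p : ℝ} (ha : 0 ≤ a) (haB : a ≤ B) (hI : 0 < I)
    (hlam : 0 < lam) (hp : 1 ≤ p) (h : I * B ^ (p - 1) ≤ lam ^ p) :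
    (a / lam) ^ p ≤ a / I := by
  have hsplit : a ^ p = a * a ^ (p - 1) := by
    rw [mul_comm, ← rpow_add_one' ha (by linarith), sub_add_cancel]
  have hpow : a ^ (p - 1) ≤ B ^ (p - 1) := rpow_le_rpow ha haB (by linarith)
  rw [div_rpow ha hlam.le, div_le_div_iff₀ (by positivity) hI, hsplit]
  calc a * a ^ (p - 1) * I ≤ a * (I * B ^ (p - 1)) := by
        rw [mul_assoc, mul_comm _ I]
        gcongr
    _ ≤ a * lam ^ p := by gcongr

end Pointwise

section LuxemburgNorm

variable {n : ℕ} {p : Esp n → ℝ} {f g : Esp n → ℝ}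

lemma vMod_eq_lintegral_enorm (n : ℕ) (p f : Esp n → ℝ) :
    vMod n p f = ∫⁻ x, ‖f x‖ₑ ^ p x := by
  simp only [vMod, enorm_eq_ofReal_abs]

lemma bddBelow_luxNorm_set (n : ℕ) (p f : Esp n → ℝ) :
    BddBelow {lam : ℝ | 0 < lam ∧ vMod n p (fun x => f x / lam) ≤ 1} :=
  ⟨0, fun _ h => h.1.le⟩

lemma luxNorm_nonneg (n : ℕ) (p f : Esp n → ℝ) : 0 ≤ luxNorm n p f :=
  Real.sInf_nonneg fun _ h => h.1.le

lemma luxNorm_le_of_forall_gt {a : ℝ} (ha : 0 ≤ a)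
    (h : ∀ lam, a < lam → vMod n p (fun x => f x / lam) ≤ 1) : luxNorm n p f ≤ a :=
  le_of_forall_gt_imp_ge_of_dense fun lam hlam =>
    csInf_le (bddBelow_luxNorm_set n p f) ⟨ha.trans_lt hlam, h lam hlam⟩

lemma le_mul_ofReal_luxNorm {X : ℝ≥0∞} {K : ℝ≥0} (hf : MemVLp n p f)
    (h : ∀ lam, 0 < lam → vMod n p (fun x => f x / lam) ≤ 1 → X ≤ K * ENNReal.ofReal lam) :
    X ≤ K * ENNReal.ofReal (luxNorm n p f) := by
  have hmono : Monotone fun lam : ℝ => K * ENNReal.ofReal lam := fun _ _ hab =>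
    mul_le_mul' le_rfl (ENNReal.ofReal_le_ofReal hab)
  have hcont : Continuous fun lam : ℝ => K * ENNReal.ofReal lam :=
    (ENNReal.continuous_const_mul ENNReal.coe_ne_top).comp ENNReal.continuous_ofReal
  have hne : {lam : ℝ | 0 < lam ∧ vMod n p (fun x => f x / lam) ≤ 1}.Nonempty := hf.2
  rw [luxNorm, hmono.map_csInf_of_continuousAt hcont.continuousAt hne
    (bddBelow_luxNorm_set n p f)]
  refine le_sInf ?_
  rintro _ ⟨lam, ⟨hlam, hmod⟩, rfl⟩
  exact h lam hlam hmod

lemma vMod_div_le_one {B I lam : ℝ} (hp : ∀ᵐ x, 1 ≤ p x) (hI : 0 < I) (hlam : 0 < lam)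
    (hgB : ∀ᵐ x, |g x| ≤ B) (hgI : eLpNorm g 1 ≤ ENNReal.ofReal I)
    (h : ∀ᵐ x, I * B ^ (p x - 1) ≤ lam ^ p x) :
    vMod n p (fun x => g x / lam) ≤ 1 := by
  calc vMod n p (fun x => g x / lam)
      ≤ ∫⁻ x, ENNReal.ofReal I⁻¹ * ‖g x‖ₑ := by
        refine lintegral_mono_ae ?_
        filter_upwards [hp, hgB, h] with x hpx hgx hx
        rw [ENNReal.ofReal_rpow_of_nonneg (abs_nonneg _) (by linarith), enorm_eq_ofReal_abs,
          ← ENNReal.ofReal_mul (by positivity), abs_div, abs_of_pos hlam, inv_mul_eq_div]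
        exact ENNReal.ofReal_le_ofReal (div_rpow_le_div (abs_nonneg _) hgx hI hlam hpx hx)
    _ = ENNReal.ofReal I⁻¹ * eLpNorm g 1 := by
        rw [lintegral_const_mul' _ _ ENNReal.ofReal_ne_top, eLpNorm_one_eq_lintegral_enorm]
    _ ≤ ENNReal.ofReal I⁻¹ * ENNReal.ofReal I := by gcongr
    _ = 1 := by
        rw [← ENNReal.ofReal_mul (by positivity), inv_mul_cancel₀ hI.ne', ENNReal.ofReal_one]

lemma luxNorm_le_of_eLpNorm_top_le_of_eLpNorm_one_le {A L M T : ℝ} (hp : ∀ᵐ x, 1 ≤ p x)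
    (hA : 0 ≤ A) (hL : 1 ≤ L) (hM : 0 ≤ M) (hT : 0 < T)
    (hMT : ∀ᵐ x, M ^ (p x - 1) ≤ T ^ p x)
    (hg_top : eLpNorm g ∞ ≤ ENNReal.ofReal (A * M))
    (hg_one : eLpNorm g 1 ≤ ENNReal.ofReal (A * L)) :
    luxNorm n p g ≤ A * (L * T) := by
  have hL_pos : 0 < L := by linarith
  refine luxNorm_le_of_forall_gt (by positivity) fun lam hlam => ?_
  -- Replacing `A` by the positive number `lam / (L * T)` covers the degenerate case `A = 0`.
  obtain ⟨A', rfl⟩ : ∃ A', lam = A' * (L * T) := ⟨lam / (L * T), by field_simp⟩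
  have hAA' : A ≤ A' := le_of_mul_le_mul_right hlam.le (by positivity)
  have hA' : 0 < A' := hA.trans_lt (lt_of_mul_lt_mul_right hlam (by positivity))
  have hgB : ∀ᵐ x, |g x| ≤ A' * M := by
    filter_upwards [enorm_ae_le_eLpNormEssSup g volume] with x hx
    rw [← ENNReal.ofReal_le_ofReal_iff (by positivity), ← enorm_eq_ofReal_abs]
    rw [← eLpNorm_exponent_top] at hx
    exact (hx.trans hg_top).trans (by gcongr)
  refine vMod_div_le_one (I := A' * L) hp (by positivity) (by positivity) hgB
    (hg_one.trans (by gcongr)) ?_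
  filter_upwards [hp, hMT] with x hpx hx
  have hLp : L ≤ L ^ p x := self_le_rpow_of_one_le hL hpx
  calc A' * L * (A' * M) ^ (p x - 1)
      = A' ^ p x * (L * M ^ (p x - 1)) := by
        rw [mul_rpow hA'.le hM, rpow_sub_one hA'.ne']
        field_simp
    _ ≤ A' ^ p x * (L ^ p x * T ^ p x) := by gcongr
    _ = (A' * (L * T)) ^ p x := by
        rw [mul_rpow hA'.le (by positivity), mul_rpow hL_pos.le hT.le]

end LuxemburgNorm

section Embedding

variable {n : ℕ} {p : Esp n → ℝ} {P c : ℝ}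

lemma lintegral_enorm_rpow_le_vMod_add {q m : ℝ} (hq : 0 < q) (hm : 0 ≤ m)
    (hqp : ∀ᵐ x, q ≤ p x) (hpP : ∀ᵐ x, p x ≤ P)
    (hdecay : ∀ᵐ x, 1 / q - 1 / p x ≤ c / log (exp 1 + ‖x‖)) (f : Esp n → ℝ) :
    ∫⁻ x, ‖f x‖ₑ ^ q ≤ ENNReal.ofReal (exp (m * P * c)) * vMod n p f +
      ∫⁻ x : Esp n, ENNReal.ofReal ((1 + ‖x‖) ^ (-m)) := by
  rw [vMod_eq_lintegral_enorm, ← lintegral_const_mul' _ _ ENNReal.ofReal_ne_top,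
    ← lintegral_add_right _ (by fun_prop)]
  refine lintegral_mono_ae ?_
  filter_upwards [hqp, hpP, hdecay] with x hqx hxP hx
  rw [enorm_eq_ofReal_abs, ENNReal.ofReal_rpow_of_nonneg (abs_nonneg _) hq.le,
    ENNReal.ofReal_rpow_of_nonneg (abs_nonneg _) (hq.le.trans hqx),
    ← ENNReal.ofReal_mul (by positivity), ← ENNReal.ofReal_add (by positivity) (by positivity)]
  exact ENNReal.ofReal_le_ofReal
    (rpow_le_exp_mul_rpow_add (abs_nonneg _) hq hqx hxP (norm_nonneg _) hm hx)

theorem exists_eLpNorm_le_mul_luxNorm (n : ℕ) {q : ℝ≥0} (hq : 0 < q) (P c : ℝ) :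
    ∃ K : ℝ≥0, ∀ p : Esp n → ℝ, (∀ᵐ x, q ≤ p x) → (∀ᵐ x, p x ≤ P) →
      (∀ᵐ x, 1 / q - 1 / p x ≤ c / log (exp 1 + ‖x‖)) →
      ∀ f, MemVLp n p f → eLpNorm f q ≤ K * ENNReal.ofReal (luxNorm n p f) := by
  set m : ℝ := n + 1
  set S : ℝ≥0∞ := ENNReal.ofReal (exp (m * P * c)) +
    ∫⁻ x : Esp n, ENNReal.ofReal ((1 + ‖x‖) ^ (-m))
  have hS : S ≠ ∞ := ENNReal.add_ne_top.2 ⟨ENNReal.ofReal_ne_top,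
    (finite_integral_one_add_norm (by simp [m])).ne⟩
  have hroot : S ^ (1 / (q : ℝ)) ≠ ∞ := ENNReal.rpow_ne_top_of_nonneg (by positivity) hS
  lift S ^ (1 / (q : ℝ)) to ℝ≥0 using hroot with K hK
  refine ⟨K, fun p hqp hpP hdecay f hf => le_mul_ofReal_luxNorm hf fun lam hlam hmod => ?_⟩
  have hunit : eLpNorm (fun x => f x / lam) q ≤ K := by
    rw [eLpNorm_nnreal_eq_lintegral hq.ne', hK]
    gcongr
    calc ∫⁻ x, ‖f x / lam‖ₑ ^ (q : ℝ)
        ≤ ENNReal.ofReal (exp (m * P * c)) * vMod n p (fun x => f x / lam) +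
          ∫⁻ x : Esp n, ENNReal.ofReal ((1 + ‖x‖) ^ (-m)) :=
          lintegral_enorm_rpow_le_vMod_add (mod_cast hq) (by positivity) hqp hpP hdecay _
      _ ≤ S := add_le_add_left (mul_le_of_le_one_right' hmod) _
  have hscale : f = lam • fun x => f x / lam := by
    ext x
    simp only [Pi.smul_apply, smul_eq_mul]
    field_simp
  calc eLpNorm f q volume = ENNReal.ofReal lam * eLpNorm (fun x => f x / lam) q := by
        conv_lhs => rw [hscale, eLpNorm_const_smul, enorm_eq_ofReal hlam.le]
    _ ≤ ENNReal.ofReal lam * K := by gcongr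
    _ = K * ENNReal.ofReal lam := mul_comm _ _

theorem exists_eLpNorm_one_mul_le_mul_luxNorm (n : ℕ) (P c : ℝ) :
    ∃ A : ℝ≥0, ∀ p : Esp n → ℝ, (∀ᵐ x, 2 ≤ p x) → (∀ᵐ x, p x ≤ P) →
      (∀ᵐ x, 1 / 2 - 1 / p x ≤ c / log (exp 1 + ‖x‖)) →
      ∀ u v, MemVLp n p u → MemVLp n p v →
        eLpNorm (fun x => u x * v x) 1 ≤
          ENNReal.ofReal (A * (luxNorm n p u * luxNorm n p v)) := by
  obtain ⟨K, hK⟩ := exists_eLpNorm_le_mul_luxNorm n (q := 2) two_pos P c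
  refine ⟨K * K, fun p h2p hpP hdecay u v hu hv => ?_⟩
  have hL2 (f) (hf : MemVLp n p f) : eLpNorm f 2 ≤ K * ENNReal.ofReal (luxNorm n p f) :=
    mod_cast hK p (mod_cast h2p) hpP (mod_cast hdecay) f hf
  calc eLpNorm (fun x => u x * v x) 1 volume
      = eLpNorm (u • v) 1 volume := rfl
    _ ≤ eLpNorm u 2 volume * eLpNorm v 2 volume :=
        eLpNorm_smul_le_mul_eLpNorm hv.1.aestronglyMeasurable hu.1.aestronglyMeasurable
    _ ≤ (K * ENNReal.ofReal (luxNorm n p u)) * (K * ENNReal.ofReal (luxNorm n p v)) :=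
        mul_le_mul' (hL2 u hu) (hL2 v hv)
    _ = ENNReal.ofReal (↑(K * K) * (luxNorm n p u * luxNorm n p v)) := by
        rw [ENNReal.ofReal_mul (by positivity), ENNReal.ofReal_coe_nnreal,
          ENNReal.ofReal_mul (luxNorm_nonneg n p u), ENNReal.coe_mul]
        ring

end Embedding

section Convolution

variable {n : ℕ} {k f : Esp n → ℝ}

lemma enorm_convR_le_lintegral (n : ℕ) (k f : Esp n → ℝ) (x : Esp n) :
    ‖convR n k f x‖ₑ ≤ ∫⁻ y, ‖k (x - y)‖ₑ * ‖f y‖ₑ := by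
  simpa only [convR, enorm_mul] using
    enorm_integral_le_lintegral_enorm (μ := volume) fun y => k (x - y) * f y

lemma eLpNorm_top_convR_le (k : Esp n → ℝ) (hf : AEStronglyMeasurable f) :
    eLpNorm (convR n k f) ∞ ≤ eLpNorm k ∞ * eLpNorm f 1 := by
  rw [eLpNorm_exponent_top (f := convR n k f)]
  refine eLpNormEssSup_le_of_ae_enorm_bound (.of_forall fun x => ?_)
  have hk : ∀ᵐ y, ‖k (x - y)‖ₑ ≤ eLpNorm k ∞ :=
    (Measure.measurePreserving_sub_left volume x).quasiMeasurePreserving.ae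
      (enorm_ae_le_eLpNormEssSup k volume)
  calc ‖convR n k f x‖ₑ ≤ ∫⁻ y, ‖k (x - y)‖ₑ * ‖f y‖ₑ := enorm_convR_le_lintegral n k f x
    _ ≤ ∫⁻ y, eLpNorm k ∞ * ‖f y‖ₑ := lintegral_mono_ae (hk.mono fun y hy => by gcongr)
    _ = eLpNorm k ∞ volume * eLpNorm f 1 volume := by
        rw [lintegral_const_mul'' _ hf.enorm, eLpNorm_one_eq_lintegral_enorm]

lemma eLpNorm_one_convR_le (hk : AEStronglyMeasurable k) (hf : AEStronglyMeasurable f) :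
    eLpNorm (convR n k f) 1 ≤ eLpNorm k 1 * eLpNorm f 1 := by
  have hmeas : AEMeasurable (Function.uncurry fun x y => ‖k (x - y)‖ₑ * ‖f y‖ₑ)
      ((volume : Measure (Esp n)).prod volume) :=
    (hk.comp_quasiMeasurePreserving
      (quasiMeasurePreserving_sub volume volume)).enorm.mul hf.comp_snd.enorm
  simp only [eLpNorm_one_eq_lintegral_enorm]
  calc ∫⁻ x, ‖convR n k f x‖ₑ
      ≤ ∫⁻ x, ∫⁻ y, ‖k (x - y)‖ₑ * ‖f y‖ₑ := lintegral_mono (enorm_convR_le_lintegral n k f)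
    _ = ∫⁻ y, ∫⁻ x, ‖k (x - y)‖ₑ * ‖f y‖ₑ := lintegral_lintegral_swap hmeas
    _ = ∫⁻ y, (∫⁻ x, ‖k x‖ₑ) * ‖f y‖ₑ := by
        congr 1 with y
        rw [lintegral_mul_const' _ _ enorm_ne_top,
          lintegral_sub_right_eq_self (fun x => ‖k x‖ₑ) y]
    _ = (∫⁻ x, ‖k x‖ₑ) * ∫⁻ y, ‖f y‖ₑ := lintegral_const_mul'' _ hf.enorm

theorem luxNorm_convR_le {p : Esp n → ℝ} {A L M T : ℝ} (hp : ∀ᵐ x, 1 ≤ p x)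
    (hA : 0 ≤ A) (hL : 1 ≤ L) (hM : 0 ≤ M) (hT : 0 < T)
    (hMT : ∀ᵐ x, M ^ (p x - 1) ≤ T ^ p x)
    (hk : AEStronglyMeasurable k) (hf : AEStronglyMeasurable f)
    (hk_top : eLpNorm k ∞ ≤ ENNReal.ofReal M) (hk_one : eLpNorm k 1 ≤ ENNReal.ofReal L)
    (hf_one : eLpNorm f 1 ≤ ENNReal.ofReal A) :
    luxNorm n p (convR n k f) ≤ A * (L * T) := by
  refine luxNorm_le_of_eLpNorm_top_le_of_eLpNorm_one_le hp hA hL hM hT hMT ?_ ?_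
  · rw [mul_comm, ENNReal.ofReal_mul hM]
    exact (eLpNorm_top_convR_le k hf).trans (mul_le_mul' hk_top hf_one)
  · rw [mul_comm, ENNReal.ofReal_mul (by linarith)]
    exact (eLpNorm_one_convR_le hk hf).trans (mul_le_mul' hk_one hf_one)

end Convolution

section Kernel

variable {n : ℕ} {t m : ℝ}

lemma etaKer_nonneg (ht : 0 ≤ t) (x : Esp n) : 0 ≤ etaKer n t m x := by
  unfold etaKer
  positivity

lemma etaKer_le (ht : 0 ≤ t) (hm : 0 ≤ m) (x : Esp n) :
    etaKer n t m x ≤ t ^ (-(n : ℝ)) :=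
  mul_le_of_le_one_right (by positivity) <|
    rpow_le_one_of_one_le_of_nonpos (le_add_of_nonneg_right (by positivity)) (neg_nonpos.2 hm)

lemma eLpNorm_top_etaKer_le (ht : 0 ≤ t) (hm : 0 ≤ m) :
    eLpNorm (etaKer n t m) ∞ ≤ ENNReal.ofReal (t ^ (-(n : ℝ))) := by
  refine eLpNormEssSup_le_of_ae_bound (.of_forall fun x => ?_)
  rw [norm_of_nonneg (etaKer_nonneg ht x)]
  exact etaKer_le ht hm x

lemma etaKer_eq_comp_inv_smul (ht : 0 ≤ t) :
    etaKer n t m = fun x => t ^ (-(n : ℝ)) * (1 + ‖t⁻¹ • x‖) ^ (-m) := by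
  ext x
  rw [etaKer, norm_smul, norm_inv, norm_of_nonneg ht, inv_mul_eq_div]

lemma integrable_etaKer (ht : 0 < t) (hm : (n : ℝ) < m) : Integrable (etaKer n t m) := by
  have hbase : Integrable fun x : Esp n => (1 + ‖x‖) ^ (-m) :=
    integrable_one_add_norm (by rwa [finrank_euclideanSpace_fin])
  rw [etaKer_eq_comp_inv_smul ht.le]
  exact (hbase.comp_smul (inv_ne_zero ht.ne')).const_mul _

lemma integral_etaKer (ht : 0 < t) :
    ∫ x, etaKer n t m x = ∫ x : Esp n, (1 + ‖x‖) ^ (-m) := by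
  rw [etaKer_eq_comp_inv_smul ht.le, integral_const_mul,
    Measure.integral_comp_inv_smul_of_nonneg volume (fun x : Esp n => (1 + ‖x‖) ^ (-m)) ht.le,
    finrank_euclideanSpace_fin, smul_eq_mul, ← mul_assoc, rpow_neg ht.le, rpow_natCast,
    inv_mul_cancel₀ (by positivity), one_mul]

lemma eLpNorm_one_etaKer (ht : 0 < t) (hm : (n : ℝ) < m) :
    eLpNorm (etaKer n t m) 1 = ENNReal.ofReal (∫ x : Esp n, (1 + ‖x‖) ^ (-m)) := by
  rw [eLpNorm_one_eq_lintegral_enorm, lintegral_enorm_of_nonneg (etaKer_nonneg ht.le),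
    ← integral_etaKer ht, ofReal_integral_eq_lintegral_ofReal (integrable_etaKer ht hm)
      (.of_forall (etaKer_nonneg ht.le))]

end Kernel

section DecayExponent

/-- The exponent `κ` of the sharp decay rate: `t^{-nκ}` is the largest of the factors
`t^{-n(1-1/p)}` with `2 ≤ p ≤ P`. -/
def decayExponent (P t : ℝ) : ℝ := if t ≤ 1 then 1 - 1 / P else 1 / 2

lemma rpow_sub_one_le_rpow_decayExponent {N P p t : ℝ} (hN : 0 ≤ N) (ht : 0 < t) (hp : 2 ≤ p)
    (hpP : p ≤ P) : (t ^ (-N)) ^ (p - 1) ≤ (t ^ (-N * decayExponent P t)) ^ p := by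
  rw [← rpow_mul ht.le, ← rpow_mul ht.le, decayExponent, mul_assoc]
  split_ifs with h1
  · refine rpow_le_rpow_of_exponent_ge ht h1 (mul_le_mul_of_nonpos_left ?_ (neg_nonpos.2 hN))
    have : p / P ≤ 1 := div_le_one_of_le₀ hpP (by linarith)
    linarith [show (1 - 1 / P) * p = p - p / P by ring]
  · refine rpow_le_rpow_of_exponent_le (not_le.1 h1).le
      (mul_le_mul_of_nonpos_left ?_ (neg_nonpos.2 hN))
    linarith

lemma rpow_decayExponent_le {N : ℝ} (hN : 0 ≤ N) (P t : ℝ) :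
    t ^ (-N * decayExponent P t) ≤
      t ^ (-N * (if t ≤ 1 ∨ (1 < t ∧ 4 < P) then
        1 / P + (if t ≤ 1 then (1 : ℝ) else 2 / P) * (1 - 2 / P) else 1 / 2)) := by
  rcases le_or_gt t 1 with h1 | h1
  · refine le_of_eq ?_
    simp only [decayExponent, h1, true_or, if_true]
    ring_nf
  · refine rpow_le_rpow_of_exponent_le h1.le (mul_le_mul_of_nonpos_left ?_ (neg_nonpos.2 hN))
    simp only [decayExponent, h1.not_ge, h1, false_or, true_and, if_false]
    split_ifs with h4
    · have : 1 / P < 1 / 4 := one_div_lt_one_div_of_lt four_pos h4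
      have : 2 / P = 2 * (1 / P) := by ring
      nlinarith
    · exact le_rfl

end DecayExponent

theorem statement12_general (n : ℕ) {m : ℝ} (hm : (n : ℝ) < m) (P c : ℝ) :
    ∃ C : ℝ, 0 < C ∧ ∀ p : Esp n → ℝ, (∀ᵐ x, 2 ≤ p x) → (∀ᵐ x, p x ≤ P) →
      (∀ᵐ x, 1 / 2 - 1 / p x ≤ c / log (exp 1 + ‖x‖)) →
      ∀ t : ℝ, 0 < t → ∀ u v : Esp n → ℝ, MemVLp n p u → MemVLp n p v →
        luxNorm n p (convR n (etaKer n t m) (fun x => u x * v x)) ≤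
          C * t ^ (-(n : ℝ) * decayExponent P t) * luxNorm n p u * luxNorm n p v := by
  obtain ⟨A, hA⟩ := exists_eLpNorm_one_mul_le_mul_luxNorm n P c
  set L : ℝ := 1 + ∫ x : Esp n, (1 + ‖x‖) ^ (-m)
  have hL : 1 ≤ L := le_add_of_nonneg_right (integral_nonneg fun x => by positivity)
  refine ⟨(A + 1) * L, by positivity, fun p h2p hpP hdecay t ht u v hu hv => ?_⟩
  have hnorms : 0 ≤ luxNorm n p u * luxNorm n p v :=
    mul_nonneg (luxNorm_nonneg n p u) (luxNorm_nonneg n p v)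
  have hker : eLpNorm (etaKer n t m) 1 ≤ ENNReal.ofReal L :=
    (eLpNorm_one_etaKer ht hm).trans_le (ENNReal.ofReal_le_ofReal (by simp [L]))
  have hm_nonneg : 0 ≤ m := n.cast_nonneg.trans hm.le
  set T := t ^ (-(n : ℝ) * decayExponent P t)
  calc luxNorm n p (convR n (etaKer n t m) (fun x => u x * v x))
      ≤ A * (luxNorm n p u * luxNorm n p v) * (L * T) :=
        luxNorm_convR_le (h2p.mono fun x hx => by linarith) (by positivity) hL
          (rpow_nonneg ht.le _) (rpow_pos_of_pos ht _)
          (by filter_upwards [h2p, hpP] with x hx hxP using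
            rpow_sub_one_le_rpow_decayExponent n.cast_nonneg ht hx hxP)
          (integrable_etaKer ht hm).1 (hu.1.mul hv.1).aestronglyMeasurable
          (eLpNorm_top_etaKer_le ht.le hm_nonneg) hker (hA p h2p hpP hdecay u v hu hv)
    _ ≤ (A + 1) * (luxNorm n p u * luxNorm n p v) * (L * T) := by gcongr; linarith
    _ = (A + 1) * L * T * luxNorm n p u * luxNorm n p v := by ring

/-- Lemma 3.13, second estimate, of the paper: for `p ∈ P^log` with `p⁻ = p_∞ = 2` and
`p⁺ < ∞`, `‖η_{t,m} * (uv)‖_{L^{p(·)}} ≤ C t^{-nK(t)} ‖u‖_{L^{p(·)}} ‖v‖_{L^{p(·)}}`, with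
`ζ(t) = 2/p⁻ = 1` for `0 < t ≤ 1`, `ζ(t) = 2/p⁺` for `t > 1`, `K(t) = 1/p⁺ + ζ(t)(1-2/p⁺)`
if `0 < t ≤ 1` or (`t > 1` and `p⁺ > 4`), and `K(t) = 1/2` if `t > 1` and `p⁺ ≤ 4`. -/
theorem statement12 (n : ℕ) (hn : 1 ≤ n) (m : ℝ) (hm : (n : ℝ) < m)
    (pexp : Esp n → ℝ) (hpmeas : Measurable pexp) (hp1 : ∀ x, 1 ≤ pexp x)
    (pp : ℝ) (hpp : pp = essSup pexp volume)
    (hbdd : IsBoundedUnder (· ≤ ·) (ae (volume : Measure (Esp n))) pexp)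
    (hpm2 : essInf pexp volume = 2)
    (hlog : IsLogHolder n pexp (1 / 2)) :
    ∃ C : ℝ, 0 < C ∧ ∀ t : ℝ, 0 < t → ∀ u v : Esp n → ℝ,
      MemVLp n pexp u → MemVLp n pexp v →
      luxNorm n pexp (convR n (etaKer n t m) (fun x => u x * v x)) ≤
        C * t ^ (-(n : ℝ) *
          (if t ≤ 1 ∨ (1 < t ∧ 4 < pp) then
            1 / pp + (if t ≤ 1 then (1 : ℝ) else 2 / pp) * (1 - 2 / pp)
          else 1 / 2)) *
          luxNorm n pexp u * luxNorm n pexp v := by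
  obtain ⟨c, -, -, hdecay⟩ := hlog
  have h2p : ∀ᵐ x, 2 ≤ pexp x := hpm2 ▸ ae_essInf_le (isBoundedUnder_of ⟨1, hp1⟩)
  have hpP : ∀ᵐ x, pexp x ≤ pp := hpp ▸ ae_le_essSup hbdd
  obtain ⟨C, hC, h⟩ := statement12_general n hm pp c
  have hgap : ∀ᵐ x, 1 / 2 - 1 / pexp x ≤ c / log (exp 1 + ‖x‖) :=
    .of_forall fun x => (le_abs_self _).trans ((abs_sub_comm _ _).trans_le (hdecay x))
  refine ⟨C, hC, fun t ht u v hu hv => (h pexp h2p hpP hgap t ht u v hu hv).trans ?_⟩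
  have hu_nonneg := luxNorm_nonneg n pexp u
  have hv_nonneg := luxNorm_nonneg n pexp v
  have hrate := rpow_decayExponent_le n.cast_nonneg pp t
  gcongr
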